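/- Let G be a group with generating set X such that the Cayley graph Γ(G,X) is hyperbolic, and suppose the family {H_λ}_{λ∈Λ} of subgroups is hyperbolically embedded in (G,X). Then each H_λ satisfies the WPD condition in (G,X). -/

import Mathlib

open Pointwise

section BasicDefs

variable {G : Type*} [Group G]

/-- The word length of `g` with respect to the generating set `S`
(words use letters from `S ∪ S⁻¹`). -/
noncomputable def wordLength (S : Set G) (g : G) : ℕ :=
  sInf {n : ℕ | ∃ l : List G, l.length = n ∧ (∀ x ∈ l, x ∈ S ∨ x⁻¹ ∈ S) ∧ l.prod = g}

/-- The word metric on `G` with respect to the generating set `S`. -/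
noncomputable def wordDist (S : Set G) (g h : G) : ℝ :=
  (wordLength S (g⁻¹ * h) : ℝ)

/-- The closed `r`-neighborhood of a subset `A` with respect to the word metric `d_S`. -/
def nbhd (S : Set G) (r : ℝ) (A : Set G) : Set G :=
  {g : G | ∃ a ∈ A, wordDist S g a ≤ r}

/-- The distance between two subsets: the infimum of distances between their elements. -/
noncomputable def setDist (S : Set G) (A B : Set G) : ℝ :=
  sInf {r : ℝ | ∃ a ∈ A, ∃ b ∈ B, r = wordDist S a b}

/-- The conjugate subgroup `H^g = g H g⁻¹`. -/
def conjSub (g : G) (H : Subgroup G) : Subgroup G :=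
  H.map (MulAut.conj g).toMonoidHom

end BasicDefs

/-- `γ` restricted to `{0, …, n}` is a `(K, ε)`-quasigeodesic for the distance function `d`. -/
def IsQuasigeodesic {α : Type*} (d : α → α → ℝ) (K ε : ℝ) (n : ℕ) (γ : ℕ → α) : Prop :=
  ∀ i j : ℕ, i ≤ n → j ≤ n →
    (1 / K) * |(i : ℝ) - (j : ℝ)| - ε ≤ d (γ i) (γ j) ∧
      d (γ i) (γ j) ≤ K * |(i : ℝ) - (j : ℝ)| + ε

/-- `γ` restricted to `{0, …, n}` is a geodesic for the distance function `d`. -/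
def IsGeodesic {α : Type*} (d : α → α → ℝ) (n : ℕ) (γ : ℕ → α) : Prop :=
  ∀ i j : ℕ, i ≤ n → j ≤ n → d (γ i) (γ j) = |(i : ℝ) - (j : ℝ)|

/-- The path `γ` (on `{0, …, n}`) is `f`-stable: every `(K, ε)`-quasigeodesic with endpoints
on `γ` stays in the `f K ε`-neighborhood of `γ`. -/
def IsStablePath {α : Type*} (d : α → α → ℝ) (f : ℝ → ℝ → ℝ) (n : ℕ) (γ : ℕ → α) : Prop :=
  ∀ K ε : ℝ, 1 ≤ K → 0 ≤ ε → ∀ (m : ℕ) (η : ℕ → α),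
    IsQuasigeodesic d K ε m η →
    (∃ i ≤ n, η 0 = γ i) → (∃ i ≤ n, η m = γ i) →
    ∀ j ≤ m, ∃ i ≤ n, d (η j) (γ i) ≤ f K ε

/-- The Gromov product `⟨x, y⟩_w` with respect to a distance function `d`. -/
noncomputable def gromovProd {α : Type*} (d : α → α → ℝ) (w x y : α) : ℝ :=
  (d w x + d w y - d x y) / 2

/-- Gromov hyperbolicity of a distance function, via the four-point condition. -/
def IsHyperbolicDist {α : Type*} (d : α → α → ℝ) : Prop :=
  ∃ δ : ℝ, 0 ≤ δ ∧ ∀ w x y z : α,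
    min (gromovProd d w x y) (gromovProd d w y z) - δ ≤ gromovProd d w x z

section GroupDefs

variable {G : Type*} [Group G]

/-- `H` is a stable subgroup of `(G, d_S)` with stability function `f`: `H` has a finite
generating set `T` such that the inclusion `(H, d_T) → (G, d_S)` is a quasi-isometric
embedding sending every `d_T`-geodesic to an `f`-stable quasigeodesic of `(G, d_S)`. -/
def IsStableSubgroupWith (S : Set G) (H : Subgroup G) (f : ℝ → ℝ → ℝ) : Prop :=
  ∃ T : Set H, T.Finite ∧ Subgroup.closure T = ⊤ ∧
    (∃ μ c : ℝ, 1 ≤ μ ∧ 0 ≤ c ∧ ∀ h₁ h₂ : H,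
      (1 / μ) * wordDist T h₁ h₂ - c ≤ wordDist S (h₁ : G) (h₂ : G) ∧
        wordDist S (h₁ : G) (h₂ : G) ≤ μ * wordDist T h₁ h₂ + c) ∧
    ∀ (n : ℕ) (γ : ℕ → H), IsGeodesic (wordDist T) n γ →
      (∃ K ε : ℝ, 1 ≤ K ∧ 0 ≤ ε ∧
        IsQuasigeodesic (wordDist S) K ε n (fun i => (γ i : G))) ∧
      IsStablePath (wordDist S) f n (fun i => (γ i : G))

/-- `H` is a stable subgroup of `(G, d_S)`. -/
def IsStableSubgroup (S : Set G) (H : Subgroup G) : Prop :=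
  ∃ f : ℝ → ℝ → ℝ, IsStableSubgroupWith S H f

/-- The family `Q` of subgroups is hyperbolically embedded in `(G, X)`:
(Q1) geometric separation, (Q2) finite generation, (Q3) uniform quasi-isometric embedding. -/
def IsHypEmbFamily {G : Type*} [Group G] {ι : Type*} (X : Set G) (Q : ι → Subgroup G) : Prop :=
  (∀ ε : ℝ, 0 < ε → ∃ R : ℝ, ∀ (g : G) (i j : ι),
      (∃ a ∈ (Q i : Set G) ∩ nbhd X ε (g • (Q j : Set G)),
        ∃ b ∈ (Q i : Set G) ∩ nbhd X ε (g • (Q j : Set G)), R ≤ wordDist X a b) →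
      i = j ∧ g ∈ Q i) ∧
  ∃ Y : ι → Set G, (∀ i, (Y i).Finite ∧ Y i ⊆ (Q i : Set G) ∧ Subgroup.closure (Y i) = Q i) ∧
    ∃ μ c : ℝ, 1 ≤ μ ∧ 0 ≤ c ∧ ∀ i : ι, ∀ h ∈ Q i,
      (wordLength (Y i) h : ℝ) ≤ μ * (wordLength X h : ℝ) + c

/-- The subset `H` of `G` satisfies the WPD condition in `(G, X)`. -/
def WPDSet (X : Set G) (H : Set G) : Prop :=
  ∀ ε : ℝ, 0 < ε → ∃ N : ℝ, 0 < N ∧ ∀ h₁ h₂ : G, h₁ ∈ H → h₂ ∈ H →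
    N < wordDist X h₁ h₂ →
    {g : G | wordDist X h₁ (g * h₁) < ε ∧ wordDist X h₂ (g * h₂) < ε}.Finite

/-- A quasimorphism on `G`. -/
def IsQuasimorphism (q : G → ℝ) : Prop :=
  ∃ D : ℝ, 0 ≤ D ∧ ∀ x y : G, |q (x * y) - q x - q y| ≤ D

/-- A homogeneous quasimorphism on `G`. -/
def IsHomogeneousQM (q : G → ℝ) : Prop :=
  IsQuasimorphism q ∧ ∀ (x : G) (n : ℕ), q (x ^ n) = (n : ℝ) * q x

/-- `H` is a quasiconvex subgroup of `(G, d_S)`: every geodesic with endpoints in `H`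
lies in a uniformly bounded neighborhood of `H`. -/
def IsQuasiconvex (S : Set G) (H : Subgroup G) : Prop :=
  ∃ C : ℝ, 0 ≤ C ∧ ∀ (n : ℕ) (γ : ℕ → G), IsGeodesic (wordDist S) n γ →
    γ 0 ∈ H → γ n ∈ H → ∀ i ≤ n, ∃ h ∈ H, wordDist S (γ i) h ≤ C

end GroupDefs

/-!
Fix `h₁, h₂ ∈ H` at distance at least `R(ε)`. If `g` displaces both by less than `ε`, then both
lie in `H ∩ N_ε(gH)`, so geometric separation (Q1) forces `g ∈ H`. Now `h₁⁻¹ g h₁` is an element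
of `H` of `X`-length less than `ε`; since `H` is finitely generated (Q2) and undistorted (Q3), it
has bounded length in a finite generating set of `H`, which leaves finitely many choices for `g`.
-/

section WordLength

variable {G : Type*} [Group G] {S : Set G}

theorem exists_list_length_eq_wordLength {g : G} (hg : g ∈ Subgroup.closure S) :
    ∃ l : List G, l.length = wordLength S g ∧ (∀ x ∈ l, x ∈ S ∨ x⁻¹ ∈ S) ∧ l.prod = g := by
  rw [← Subgroup.mem_toSubmonoid, Subgroup.closure_toSubmonoid] at hg
  obtain ⟨l, hl, hprod⟩ := Submonoid.exists_list_of_mem_closure hg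
  have hne : {n : ℕ | ∃ l : List G, l.length = n ∧ (∀ x ∈ l, x ∈ S ∨ x⁻¹ ∈ S) ∧
      l.prod = g}.Nonempty := ⟨l.length, l, rfl, hl, hprod⟩
  exact Nat.sInf_mem hne

theorem finite_setOf_mem_closure_wordLength_le (hS : S.Finite) (n : ℕ) :
    {g ∈ (Subgroup.closure S : Set G) | wordLength S g ≤ n}.Finite := by
  have : Finite ↥(S ∪ S⁻¹) := (hS.union hS.inv).to_subtype
  refine ((List.finite_length_le ↥(S ∪ S⁻¹) n).image fun l => (l.map (↑)).prod).subset ?_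
  rintro g ⟨hg, hgn⟩
  obtain ⟨l, hlen, hl, hprod⟩ := exists_list_length_eq_wordLength hg
  lift l to List ↥(S ∪ S⁻¹) using hl
  rw [List.length_map] at hlen
  exact ⟨l, hlen.trans_le hgn, hprod⟩

end WordLength

section WPD

variable {G : Type*} [Group G] {X : Set G} {H : Subgroup G}

/-- `H` is metrically proper in `(G, d_X)`: every ball of `(G, d_X)` around the identity contains
only finitely many elements of `H`. -/
def IsMetricallyProper (X : Set G) (H : Subgroup G) : Prop :=
  ∀ r : ℝ, {h ∈ (H : Set G) | (wordLength X h : ℝ) ≤ r}.Finite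

/-- `H` is geometrically separated in `(G, d_X)`: only the coset `H` itself can have an
`ε`-neighborhood meeting `H` in a set of large diameter. This is condition (Q1) for a single
subgroup; as there, diameter at least `R` is encoded by a pair of points at distance at
least `R`. -/
def IsGeometricallySeparated (X : Set G) (H : Subgroup G) : Prop :=
  ∀ ε : ℝ, 0 < ε → ∃ R : ℝ, ∀ g : G,
    (∃ a ∈ (H : Set G) ∩ nbhd X ε (g • (H : Set G)),
      ∃ b ∈ (H : Set G) ∩ nbhd X ε (g • (H : Set G)), R ≤ wordDist X a b) →
    g ∈ H

theorem isMetricallyProper_closure_of_wordLength_le {Y : Set G} (hY : Y.Finite)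
    (φ : ℕ → ℝ) (hφ : ∀ h ∈ Subgroup.closure Y, (wordLength Y h : ℝ) ≤ φ (wordLength X h)) :
    IsMetricallyProper X (Subgroup.closure Y) := by
  intro r
  refine ((Set.finite_Iic ⌊r⌋₊).biUnion fun n _ =>
    finite_setOf_mem_closure_wordLength_le hY ⌊φ n⌋₊).subset ?_
  rintro h ⟨hh, hr⟩
  exact Set.mem_biUnion (Nat.le_floor hr) ⟨hh, Nat.le_floor (hφ h hh)⟩

theorem IsMetricallyProper.finite_setOf_wordDist_mul_le (hH : IsMetricallyProper X H) {h k : G}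
    (hh : h ∈ H) (hk : k ∈ H) (r : ℝ) :
    {g ∈ (H : Set G) | wordDist X h (g * k) ≤ r}.Finite := by
  have hinj : Function.Injective fun g : G => h⁻¹ * (g * k) :=
    (mul_right_injective h⁻¹).comp (mul_left_injective k)
  refine ((hH r).preimage hinj.injOn).subset ?_
  rintro g ⟨hg, hr⟩
  exact ⟨H.mul_mem (H.inv_mem hh) (H.mul_mem hg hk), hr⟩

theorem mem_inter_nbhd_smul {h g : G} {ε : ℝ} (hh : h ∈ H) (hg : wordDist X h (g * h) ≤ ε) :
    h ∈ (H : Set G) ∩ nbhd X ε (g • (H : Set G)) :=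
  ⟨hh, g * h, Set.smul_mem_smul_set hh, hg⟩

theorem IsGeometricallySeparated.wpdSet (hsep : IsGeometricallySeparated X H)
    (hproper : IsMetricallyProper X H) : WPDSet X (H : Set G) := by
  intro ε hε
  obtain ⟨R, hR⟩ := hsep ε hε
  refine ⟨max R 1, by positivity, fun h₁ h₂ hh₁ hh₂ hfar => ?_⟩
  refine (hproper.finite_setOf_wordDist_mul_le hh₁ hh₁ ε).subset ?_
  rintro g ⟨hg₁, hg₂⟩
  have hgH : g ∈ H := hR g ⟨h₁, mem_inter_nbhd_smul hh₁ hg₁.le,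
    h₂, mem_inter_nbhd_smul hh₂ hg₂.le, (le_max_left R 1).trans hfar.le⟩
  exact ⟨hgH, hg₁.le⟩

end WPD

section HypEmbFamily

variable {G : Type*} [Group G] {Λ : Type*} {X : Set G} {H : Λ → Subgroup G}

theorem IsHypEmbFamily.isGeometricallySeparated (he : IsHypEmbFamily X H) (lam : Λ) :
    IsGeometricallySeparated X (H lam) := by
  intro ε hε
  obtain ⟨R, hR⟩ := he.1 ε hε
  exact ⟨R, fun g hg => (hR g lam lam hg).2⟩

theorem IsHypEmbFamily.isMetricallyProper (he : IsHypEmbFamily X H) (lam : Λ) :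
    IsMetricallyProper X (H lam) := by
  obtain ⟨-, Y, hY, μ, c, -, -, hQ3⟩ := he
  obtain ⟨hfin, -, hcl⟩ := hY lam
  have hundistorted := hQ3 lam
  rw [← hcl] at hundistorted ⊢
  exact isMetricallyProper_closure_of_wordLength_le hfin (fun n => μ * n + c) hundistorted

theorem wpd_of_hyperbolically_embedded_general (he : IsHypEmbFamily X H) (lam : Λ) :
    WPDSet X (H lam : Set G) :=
  (he.isGeometricallySeparated lam).wpdSet (he.isMetricallyProper lam)

end HypEmbFamily

/-- **Hyperbolically embedded subgroups satisfy the WPD condition.** -/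
theorem wpd_of_hyperbolically_embedded {G : Type*} [Group G] {Λ : Type*} (X : Set G)
    (hXgen : Subgroup.closure X = ⊤) (hhyp : IsHyperbolicDist (wordDist X))
    (H : Λ → Subgroup G) (he : IsHypEmbFamily X H) :
    ∀ lam : Λ, WPDSet X (H lam : Set G) := by
  exact wpd_of_hyperbolically_embedded_general he
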